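/- arXiv:2210.03040 — 2 statements merged into one kernel-verified Lean document; each statement's English description precedes it below -/
import Mathlib

section
/- (Proposition 2, forward direction.) Let h, γ, η, π_v be real numbers with h > 0, 0 < γ ≤ 1, 0 ≤ η ≤ h − 1, and |γ·π_v| < h. Set the target scanline to the middle scanline s = h/2 and define the forward correlation factor c = γ·(s − η)·(h − γ·π_v)/h². Then: if η < h/2 then 0 < c < 1; if η = h/2 then c = 0; and if η > h/2 then −1 < c < 0. In particular c always lies in the open interval (−1, 1). -/
/-!
The factor is linear in the displacement `s - η`, with slope `γ * (h - γ * πv) / h ^ 2`. Since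
`|γ * πv| < h`, this slope lies strictly between `0` and `2 * γ / h`: positivity makes the factor
inherit the sign of `s - η`, and the upper bound keeps it below `γ` in absolute value as long as
the target is at most half an image away.
-/

section ForwardCorrelation

variable {𝕜 : Type*} [Field 𝕜]

/-- The forward correlation factor `c` of the rolling-shutter model, relating the undistortion flow
of a pixel on scanline `η` toward the target scanline `s` to its optical flow. The target is a
parameter, and scanlines take values in any field. -/
def forwardCorrelationFactor (h γ s η πv : 𝕜) : 𝕜 :=
  γ * (s - η) * (h - γ * πv) / h ^ 2

/-- The rate at which the forward correlation factor grows with the displacement `s - η` from the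
pixel's scanline to the target, so that size and sign of the factor can be read off separately. -/
def forwardCorrelationSlope (h γ πv : 𝕜) : 𝕜 :=
  γ * (h - γ * πv) / h ^ 2

theorem forwardCorrelationFactor_eq_slope_mul (h γ s η πv : 𝕜) :
    forwardCorrelationFactor h γ s η πv = forwardCorrelationSlope h γ πv * (s - η) := by
  unfold forwardCorrelationFactor forwardCorrelationSlope
  ring

variable [LinearOrder 𝕜] [IsStrictOrderedRing 𝕜] {h γ s η πv : 𝕜}

theorem forwardCorrelationSlope_pos (hh : h ≠ 0) (hγ : 0 < γ) (hπ : γ * πv < h) :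
    0 < forwardCorrelationSlope h γ πv :=
  div_pos (mul_pos hγ (sub_pos.mpr hπ)) (by positivity)

theorem forwardCorrelationSlope_lt (hh : 0 < h) (hγ : 0 < γ) (hπ : -h < γ * πv) :
    forwardCorrelationSlope h γ πv < 2 * γ / h := by
  have hlt : h - γ * πv < 2 * h := by linarith
  calc γ * (h - γ * πv) / h ^ 2 < γ * (2 * h) / h ^ 2 := by gcongr
    _ = 2 * γ / h := by field_simp

theorem forwardCorrelationFactor_pos_iff (hh : h ≠ 0) (hγ : 0 < γ) (hπ : γ * πv < h) :
    0 < forwardCorrelationFactor h γ s η πv ↔ η < s := by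
  rw [forwardCorrelationFactor_eq_slope_mul,
    mul_pos_iff_of_pos_left (forwardCorrelationSlope_pos hh hγ hπ), sub_pos]

theorem forwardCorrelationFactor_eq_zero_iff (hh : h ≠ 0) (hγ : 0 < γ) (hπ : γ * πv < h) :
    forwardCorrelationFactor h γ s η πv = 0 ↔ η = s := by
  rw [forwardCorrelationFactor_eq_slope_mul,
    mul_eq_zero_iff_left (forwardCorrelationSlope_pos hh hγ hπ).ne', sub_eq_zero, eq_comm]

theorem forwardCorrelationFactor_neg_iff (hh : h ≠ 0) (hγ : 0 < γ) (hπ : γ * πv < h) :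
    forwardCorrelationFactor h γ s η πv < 0 ↔ s < η := by
  rw [forwardCorrelationFactor_eq_slope_mul, ← neg_pos, ← mul_neg,
    mul_pos_iff_of_pos_left (forwardCorrelationSlope_pos hh hγ hπ), neg_sub, sub_pos]

theorem abs_forwardCorrelationFactor_lt (hγ : 0 < γ) (hπ : |γ * πv| < h) (hη : |s - η| ≤ h / 2) :
    |forwardCorrelationFactor h γ s η πv| < γ := by
  have hh : 0 < h := (abs_nonneg _).trans_lt hπ
  obtain ⟨hπ_lower, hπ_upper⟩ := abs_lt.mp hπ
  have slope_pos := forwardCorrelationSlope_pos hh.ne' hγ hπ_upper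
  calc |forwardCorrelationFactor h γ s η πv|
      = forwardCorrelationSlope h γ πv * |s - η| := by
        rw [forwardCorrelationFactor_eq_slope_mul, abs_mul, abs_of_pos slope_pos]
    _ ≤ forwardCorrelationSlope h γ πv * (h / 2) := by gcongr
    _ < 2 * γ / h * (h / 2) := by gcongr; exact forwardCorrelationSlope_lt hh hγ hπ_lower
    _ = γ := by field_simp

theorem forward_correlation_factor_bounds_general
    (hγ : 0 < γ) (hπ : |γ * πv| < h) (hη : |s - η| ≤ h / 2) :
    (0 < forwardCorrelationFactor h γ s η πv ↔ η < s) ∧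
    (forwardCorrelationFactor h γ s η πv = 0 ↔ η = s) ∧
    (forwardCorrelationFactor h γ s η πv < 0 ↔ s < η) ∧
    |forwardCorrelationFactor h γ s η πv| < γ := by
  have hh : h ≠ 0 := ((abs_nonneg _).trans_lt hπ).ne'
  have hπ_upper : γ * πv < h := (abs_lt.mp hπ).2
  exact ⟨forwardCorrelationFactor_pos_iff hh hγ hπ_upper,
    forwardCorrelationFactor_eq_zero_iff hh hγ hπ_upper,
    forwardCorrelationFactor_neg_iff hh hγ hπ_upper,
    abs_forwardCorrelationFactor_lt hγ hπ hη⟩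

end ForwardCorrelation

/-- Proposition 2, forward direction: the forward middle-scanline correlation factor
lies in (0,1), equals 0, or lies in (−1,0) according to η < h/2, η = h/2, η > h/2;
in particular it always lies in (−1, 1). -/
theorem forward_correlation_factor_bounds
    (h γ η πv : ℝ) (hh : 0 < h) (hγ0 : 0 < γ) (hγ1 : γ ≤ 1)
    (hη0 : 0 ≤ η) (hη1 : η ≤ h - 1) (hπ : |γ * πv| < h) :
    (η < h / 2 →
      0 < γ * (h / 2 - η) * (h - γ * πv) / h ^ 2 ∧
      γ * (h / 2 - η) * (h - γ * πv) / h ^ 2 < 1) ∧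
    (η = h / 2 → γ * (h / 2 - η) * (h - γ * πv) / h ^ 2 = 0) ∧
    (η > h / 2 →
      -1 < γ * (h / 2 - η) * (h - γ * πv) / h ^ 2 ∧
      γ * (h / 2 - η) * (h - γ * πv) / h ^ 2 < 0) ∧
    (-1 < γ * (h / 2 - η) * (h - γ * πv) / h ^ 2 ∧
      γ * (h / 2 - η) * (h - γ * πv) / h ^ 2 < 1) := by
  have hη : |h / 2 - η| ≤ h / 2 := abs_le.mpr ⟨by linarith, by linarith⟩
  obtain ⟨pos_iff, zero_iff, neg_iff, abs_lt_γ⟩ :=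
    forward_correlation_factor_bounds_general hγ0 hπ hη
  obtain ⟨lower, upper⟩ := abs_lt.mp (abs_lt_γ.trans_le hγ1)
  exact ⟨fun hlt => ⟨pos_iff.mpr hlt, upper⟩, zero_iff.mpr,
    fun hgt => ⟨lower, neg_iff.mpr hgt⟩, lower, upper⟩
end

section
/- (Proposition 2, backward direction.) Let h, γ, η, π_v be real numbers with h > 0, −1 ≤ γ < 0, 0 ≤ η ≤ h − 1, and |γ·π_v| < h. Set the target scanline to the middle scanline s = h/2 and define the backward correlation factor c = γ·(s − η)·(h − γ·π_v)/h². Then: if η < h/2 then −1 < c < 0; if η = h/2 then c = 0; and if η > h/2 then 0 < c < 1. In particular c always lies in the open interval (−1, 1). -/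
/-!
A motion with `|γ πv| < h` keeps `h - γ πv` in `(0, 2h)`. Hence `c = γ (s - η) (h - γ πv) / h²` has
the sign of `γ (s - η)`, and since `|γ (s - η)| ≤ h / 2`, also `|c| < (h / 2) (2h) / h² = 1`.
-/

/-- The factor `c` relating the rolling-shutter undistortion flow of a pixel on scanline `η` toward
the target scanline `s` to its optical flow, for images with `h` scanlines, readout time ratio `γ`
and vertical motion `πv`. Scanlines are elements of the scalar field, not integer indices. -/
def backwardCorrelationFactor {K : Type*} [Field K] (h γ η πv s : K) : K :=
  γ * (s - η) * (h - γ * πv) / h ^ 2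

theorem backwardCorrelationFactor_self {K : Type*} [Field K] (h γ πv s : K) :
    backwardCorrelationFactor h γ s πv s = 0 := by
  simp [backwardCorrelationFactor]

section

variable {K : Type*} [Field K] [LinearOrder K] [IsStrictOrderedRing K] {h γ η πv s : K}

theorem backwardCorrelationFactor_neg (hh : h ≠ 0) (hγ : γ < 0) (hπ : γ * πv < h) (hη : η < s) :
    backwardCorrelationFactor h γ η πv s < 0 :=
  div_neg_of_neg_of_pos
    (mul_neg_of_neg_of_pos (mul_neg_of_neg_of_pos hγ (sub_pos.mpr hη)) (sub_pos.mpr hπ))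
    (sq_pos_of_ne_zero hh)

theorem backwardCorrelationFactor_pos (hh : h ≠ 0) (hγ : γ < 0) (hπ : γ * πv < h) (hη : s < η) :
    0 < backwardCorrelationFactor h γ η πv s :=
  div_pos (mul_pos (mul_pos_of_neg_of_neg hγ (sub_neg.mpr hη)) (sub_pos.mpr hπ))
    (sq_pos_of_ne_zero hh)

theorem abs_backwardCorrelationFactor_lt_one (hdist : |γ * (s - η)| ≤ h / 2) (hπ : |γ * πv| < h) :
    |backwardCorrelationFactor h γ η πv s| < 1 := by
  have hh : 0 < h := (abs_nonneg _).trans_lt hπ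
  obtain ⟨hlo, hhi⟩ := abs_lt.mp hπ
  have hpos : 0 < h - γ * πv := sub_pos.mpr hhi
  have hlt : h - γ * πv < 2 * h := by linarith
  calc |backwardCorrelationFactor h γ η πv s|
      = |γ * (s - η)| * (h - γ * πv) / h ^ 2 := by
        rw [backwardCorrelationFactor, abs_div, abs_mul, abs_of_pos hpos, abs_of_pos (pow_pos hh 2)]
    _ ≤ h / 2 * (h - γ * πv) / h ^ 2 := by gcongr
    _ < h / 2 * (2 * h) / h ^ 2 := by gcongr
    _ = 1 := by field_simp

theorem backward_correlation_factor_bounds_general (hγ0 : -1 ≤ γ) (hγ1 : γ < 0)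
    (hη : |s - η| ≤ h / 2) (hπ : |γ * πv| < h) :
    (η < s → backwardCorrelationFactor h γ η πv s ∈ Set.Ioo (-1) 0) ∧
    (η = s → backwardCorrelationFactor h γ η πv s = 0) ∧
    (s < η → backwardCorrelationFactor h γ η πv s ∈ Set.Ioo 0 1) ∧
    backwardCorrelationFactor h γ η πv s ∈ Set.Ioo (-1) 1 := by
  have hh : h ≠ 0 := ((abs_nonneg _).trans_lt hπ).ne'
  have hπ' : γ * πv < h := (abs_lt.mp hπ).2
  have hγ : |γ| ≤ 1 := abs_le.mpr ⟨hγ0, hγ1.le.trans zero_le_one⟩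
  have hdist : |γ * (s - η)| ≤ h / 2 :=
    calc |γ * (s - η)| = |γ| * |s - η| := abs_mul _ _
      _ ≤ |s - η| := mul_le_of_le_one_left (abs_nonneg _) hγ
      _ ≤ h / 2 := hη
  have hbound := abs_lt.mp (abs_backwardCorrelationFactor_lt_one hdist hπ)
  exact ⟨fun hlt ↦ ⟨hbound.1, backwardCorrelationFactor_neg hh hγ1 hπ' hlt⟩,
    fun heq ↦ heq ▸ backwardCorrelationFactor_self ..,
    fun hgt ↦ ⟨backwardCorrelationFactor_pos hh hγ1 hπ' hgt, hbound.2⟩, hbound⟩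

end

/-- Proposition 2, backward direction: with γ ∈ [−1, 0), the backward middle-scanline
correlation factor lies in (−1,0), equals 0, or lies in (0,1) according to
η < h/2, η = h/2, η > h/2; in particular it always lies in (−1, 1). -/
theorem backward_correlation_factor_bounds
    (h γ η πv : ℝ) (hh : 0 < h) (hγ0 : -1 ≤ γ) (hγ1 : γ < 0)
    (hη0 : 0 ≤ η) (hη1 : η ≤ h - 1) (hπ : |γ * πv| < h) :
    (η < h / 2 →
      -1 < γ * (h / 2 - η) * (h - γ * πv) / h ^ 2 ∧
      γ * (h / 2 - η) * (h - γ * πv) / h ^ 2 < 0) ∧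
    (η = h / 2 → γ * (h / 2 - η) * (h - γ * πv) / h ^ 2 = 0) ∧
    (η > h / 2 →
      0 < γ * (h / 2 - η) * (h - γ * πv) / h ^ 2 ∧
      γ * (h / 2 - η) * (h - γ * πv) / h ^ 2 < 1) ∧
    (-1 < γ * (h / 2 - η) * (h - γ * πv) / h ^ 2 ∧
      γ * (h / 2 - η) * (h - γ * πv) / h ^ 2 < 1) :=
  backward_correlation_factor_bounds_general hγ0 hγ1 (abs_le.mpr ⟨by linarith, by linarith⟩) hπ
end
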